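/- arXiv:1412.1567 — 4 statements merged into one kernel-verified Lean document; each statement's English description precedes it below -/
import Mathlib

section
/- Let H ∈ ℂ^{m×n} with columns h_1,…,h_n, let C_xx ∈ ℂ^{n×n} be diagonal with positive real diagonal entries σ_{x_1}²,…,σ_{x_n}², and let C_nn ∈ ℂ^{m×m} be positive definite. Set C = H C_xx Hᴴ + C_nn (which is positive definite) and assume h_i ≠ 0. Define [D]_{i,i} = 1 / (σ_{x_i}² h_iᴴ C⁻¹ h_i) and let e_{CL,i}ᴴ be the i-th row of E_CL = D C_xx Hᴴ C⁻¹, where D is the diagonal matrix with these entries. Then e_{CL,i}ᴴ h_i = 1, and e_{CL,i} is the unique minimizer of eᴴ C e over all e ∈ ℂ^m satisfying eᴴ h_i = 1. -/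
open Matrix
open scoped ComplexOrder

theorem aux_min {m : ℕ} (C : Matrix (Fin m) (Fin m) ℂ) (hC : C.PosDef) (g h : Fin m → ℂ) (c : ℂ)
    (hg : C *ᵥ g = c • h) (hg1 : star g ⬝ᵥ h = 1) (e : Fin m → ℂ) (he : star e ⬝ᵥ h = 1) :
    (star g ⬝ᵥ (C *ᵥ g)).re ≤ (star e ⬝ᵥ (C *ᵥ e)).re ∧
      (star e ⬝ᵥ (C *ᵥ e) = star g ⬝ᵥ (C *ᵥ g) → e = g) := by
  obtain ⟨d, rfl⟩ : ∃ d, e = g + d := ⟨e - g, by simp⟩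
  have hd : star d ⬝ᵥ h = 0 := by
    rw [star_add, add_dotProduct, hg1] at he
    simpa using he
  have h1 : star d ⬝ᵥ (C *ᵥ g) = 0 := by rw [hg, dotProduct_smul, hd, smul_zero]
  have h2 : star g ⬝ᵥ (C *ᵥ d) = 0 := by
    have h3 : star (star d ⬝ᵥ (C *ᵥ g)) = star g ⬝ᵥ (C *ᵥ d) := by
      rw [star_dotProduct, star_star, star_mulVec, hC.isHermitian.eq, ← dotProduct_mulVec]
    rw [← h3, h1, star_zero]
  have key : star (g + d) ⬝ᵥ (C *ᵥ (g + d)) = star g ⬝ᵥ (C *ᵥ g) + star d ⬝ᵥ (C *ᵥ d) := by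
    rw [star_add, mulVec_add, add_dotProduct, dotProduct_add, dotProduct_add, h1, h2]
    ring
  rw [key]
  constructor
  · have := (Complex.le_def.1 (hC.posSemidef.dotProduct_mulVec_nonneg d)).1
    simp only [Complex.zero_re] at this
    rw [Complex.add_re]
    linarith
  · intro h
    by_contra hne
    have hd0 : d ≠ 0 := by
      rintro rfl
      simp at hne
    have := hC.dotProduct_mulVec_pos hd0
    rw [add_eq_left] at h
    exact this.ne' h

/-- for the linear model with diagonal `C_xx` having positive entries and
positive definite `C_nn`, with `C = H C_xx Hᴴ + C_nn` (positive definite) and `h_i ≠ 0`,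
the `i`-th row `e_{CL,i}ᴴ` of `E_CL = D C_xx Hᴴ C⁻¹` (with `[D]_{i,i} = 1/(σ_{x_i}² h_iᴴC⁻¹h_i)`)
satisfies `e_{CL,i}ᴴ h_i = 1` and `e_{CL,i}` is the unique minimizer of `eᴴCe` subject to
`eᴴh_i = 1`. -/
theorem stmt_5 {m n : ℕ} (H : Matrix (Fin m) (Fin n) ℂ)
    (σ : Fin n → ℝ) (hσ : ∀ j, 0 < σ j)
    (Cnn : Matrix (Fin m) (Fin m) ℂ) (hCnn : Cnn.PosDef)
    (i : Fin n) (hhi : (fun k => H k i) ≠ 0) :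
    let Cxx : Matrix (Fin n) (Fin n) ℂ := Matrix.diagonal fun j => (σ j : ℂ)
    let C := H * Cxx * Hᴴ + Cnn
    let hi : Fin m → ℂ := fun k => H k i
    let D : Matrix (Fin n) (Fin n) ℂ :=
      Matrix.diagonal fun j =>
        1 / ((σ j : ℂ) * (star (fun k => H k j) ⬝ᵥ (C⁻¹ *ᵥ fun k => H k j)))
    let ECL := D * Cxx * Hᴴ * C⁻¹
    let eCL : Fin m → ℂ := star (ECL i)
    C.PosDef ∧
    ECL i ⬝ᵥ hi = 1 ∧
    ∀ e : Fin m → ℂ, star e ⬝ᵥ hi = 1 →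
      (star eCL ⬝ᵥ (C *ᵥ eCL)).re ≤ (star e ⬝ᵥ (C *ᵥ e)).re ∧
      (star e ⬝ᵥ (C *ᵥ e) = star eCL ⬝ᵥ (C *ᵥ eCL) → e = eCL) := by
  intro Cxx C hi D ECL eCL
  have hCxx : Cxx.PosSemidef := by
    apply Matrix.PosSemidef.diagonal
    intro j
    change (0 : ℂ) ≤ (σ j : ℂ)
    exact_mod_cast (hσ j).le
  have hC : C.PosDef := Matrix.PosDef.posSemidef_add (hCxx.mul_mul_conjTranspose_same H) hCnn
  have hCi : C⁻¹.PosDef := hC.inv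
  have ha : 0 < star hi ⬝ᵥ (C⁻¹ *ᵥ hi) := hCi.dotProduct_mulVec_pos hhi
  set a := star hi ⬝ᵥ (C⁻¹ *ᵥ hi) with ha_def
  have hs : (σ i : ℂ) ≠ 0 := by exact_mod_cast (hσ i).ne'
  have hE : ECL i = a⁻¹ • (star hi ᵥ* C⁻¹) := by
    have hrow : (D * Cxx * Hᴴ) i = a⁻¹ • star hi := by
      ext k
      simp only [D, Cxx, Matrix.diagonal_mul_diagonal, Matrix.diagonal_mul, Pi.smul_apply, smul_eq_mul,
        Matrix.conjTranspose_apply, Pi.star_apply]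
      change 1 / ((σ i : ℂ) * a) * (σ i : ℂ) * star (H k i) = a⁻¹ * star (H k i)
      have := ha.ne'
      field_simp
    change (D * Cxx * Hᴴ * C⁻¹) i = _
    rw [Matrix.mul_apply_eq_vecMul, hrow, Matrix.smul_vecMul]
  have h1 : ECL i ⬝ᵥ hi = 1 := by
    rw [hE, smul_dotProduct, ← dotProduct_mulVec, ← ha_def, smul_eq_mul, inv_mul_cancel₀ ha.ne']
  refine ⟨hC, h1, fun e he => ?_⟩
  refine aux_min C hC eCL hi (star a⁻¹) ?_ (by simpa [eCL] using h1) e he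
  have hu : IsUnit C.det := (Matrix.isUnit_iff_isUnit_det _).1 hC.isUnit
  simp only [eCL]
  rw [hE, star_smul, star_vecMul, star_star, hCi.isHermitian.eq, mulVec_smul, mulVec_mulVec,
    Matrix.mul_nonsing_inv _ hu, one_mulVec]
end

section
/- Let C₀ ∈ ℂ^{m×m} be positive definite, let h ∈ ℂ^m be nonzero, let σ² ≥ 0 be real, and set C = C₀ + σ² h hᴴ (which is positive definite). Then (hᴴ C⁻¹ h)⁻¹ C⁻¹ h = (hᴴ C₀⁻¹ h)⁻¹ C₀⁻¹ h. In particular, in the linear model with mutually independent parameters, the i-th row of the CWCU LMMSE estimator, e_{CL,i} = (h_iᴴ C⁻¹ h_i)⁻¹ C⁻¹ h_i with C = H C_xx Hᴴ + C_nn, is independent of the variance σ_{x_i}² of the i-th parameter and equals (h_iᴴ C_i⁻¹ h_i)⁻¹ C_i⁻¹ h_i, where C_i = H̄_i C_{x̄_i x̄_i} H̄_iᴴ + C_nn is obtained by removing the contribution σ_{x_i}² h_i h_iᴴ of the i-th parameter from C. -/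
open Matrix
open scoped ComplexOrder

/-- for positive definite `C₀`, nonzero `h`, `σ² ≥ 0` and
`C = C₀ + σ² h hᴴ` (positive definite), one has
`(hᴴC⁻¹h)⁻¹ C⁻¹h = (hᴴC₀⁻¹h)⁻¹ C₀⁻¹h`; i.e. the CWCU LMMSE row is independent of the
variance of the corresponding parameter. -/
theorem stmt_6 {m : ℕ} (C0 : Matrix (Fin m) (Fin m) ℂ) (hC0 : C0.PosDef)
    (h : Fin m → ℂ) (hh : h ≠ 0) (σ2 : ℝ) (hσ2 : 0 ≤ σ2) :
    let C := C0 + (σ2 : ℂ) • Matrix.vecMulVec h (star h)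
    C.PosDef ∧
    (star h ⬝ᵥ (C⁻¹ *ᵥ h))⁻¹ • (C⁻¹ *ᵥ h) =
      (star h ⬝ᵥ (C0⁻¹ *ᵥ h))⁻¹ • (C0⁻¹ *ᵥ h) := by
  intro C
  have hC : C.PosDef := by
    refine hC0.add_posSemidef ?_
    refine (Matrix.posSemidef_vecMulVec_self_star h).smul ?_
    exact_mod_cast hσ2
  refine ⟨hC, ?_⟩
  have d0 : IsUnit C0.det := (Matrix.isUnit_iff_isUnit_det _).1 hC0.isUnit
  have d1 : IsUnit C.det := (Matrix.isUnit_iff_isUnit_det _).1 hC.isUnit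
  obtain ⟨u, hu⟩ : ∃ u, u = C⁻¹ *ᵥ h := ⟨_, rfl⟩
  obtain ⟨v, hv⟩ : ∃ v, v = C0⁻¹ *ᵥ h := ⟨_, rfl⟩
  have hCu : C *ᵥ u = h := by
    rw [hu, Matrix.mulVec_mulVec, Matrix.mul_nonsing_inv _ d1, Matrix.one_mulVec]
  have hexp : C *ᵥ u = C0 *ᵥ u + ((σ2 : ℂ) * (star h ⬝ᵥ u)) • h := by
    simp only [C, Matrix.add_mulVec, Matrix.smul_mulVec, Matrix.vecMulVec_mulVec]
    ext i
    simp
    ring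
  obtain ⟨k, hk⟩ : ∃ k : ℂ, k = 1 - (σ2 : ℂ) * (star h ⬝ᵥ u) := ⟨_, rfl⟩
  have h0 : C0 *ᵥ u = k • h := by
    rw [hk, sub_smul, one_smul, eq_sub_iff_add_eq, ← hexp, hCu]
  have huv : u = k • v := by
    rw [hv, ← Matrix.mulVec_smul, ← h0, Matrix.mulVec_mulVec, Matrix.nonsing_inv_mul _ d0,
      Matrix.one_mulVec]
  have hk0 : k ≠ 0 := by
    intro hz
    apply hh
    rw [← hCu, huv, hz, zero_smul, Matrix.mulVec_zero]
  rw [← hu, ← hv, huv, dotProduct_smul, smul_smul, smul_eq_mul, mul_inv, mul_right_comm,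
    inv_mul_cancel₀ hk0, one_mul]
end

section
/- Let H ∈ ℂ^{m×n}, let C_nn ∈ ℂ^{m×m} be positive definite, let V ∈ ℂ^{n×p}, and assume Vᴴ Hᴴ C_nn⁻¹ H V is invertible. Then for every matrix E ∈ ℂ^{n×m} satisfying the subspace unbiasedness constraint E H V = V, the matrix E C_nn Eᴴ − V(Vᴴ Hᴴ C_nn⁻¹ H V)⁻¹ Vᴴ is positive semidefinite; i.e., E_{B2} = V(Vᴴ Hᴴ C_nn⁻¹ H V)⁻¹ Vᴴ Hᴴ C_nn⁻¹ minimizes the error covariance (in the Loewner order) among all linear estimators satisfying EHV = V. -/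
open Matrix
open scoped ComplexOrder

theorem aux_blue {m n p : ℕ} (A : Matrix (Fin m) (Fin p) ℂ)
    (C : Matrix (Fin m) (Fin m) ℂ) (hC : C.PosDef)
    (V : Matrix (Fin n) (Fin p) ℂ) (M : Matrix (Fin p) (Fin p) ℂ)
    (hM : M = Aᴴ * (C⁻¹ * A)) (hInv : IsUnit M.det)
    (E : Matrix (Fin n) (Fin m) ℂ) (hE : E * A = V) :
    (E * C * Eᴴ - V * M⁻¹ * Vᴴ).PosSemidef := by
  have hCd : IsUnit C.det := (Matrix.isUnit_iff_isUnit_det C).1 hC.isUnit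
  have hCi : C⁻¹ᴴ = C⁻¹ := by rw [conjTranspose_nonsing_inv, hC.isHermitian.eq]
  have hMh : Mᴴ = M := by
    rw [hM]; simp only [conjTranspose_mul, conjTranspose_conjTranspose, hCi, Matrix.mul_assoc]
  have hMi : M⁻¹ᴴ = M⁻¹ := by rw [conjTranspose_nonsing_inv, hMh]
  have hE' : Aᴴ * Eᴴ = Vᴴ := by rw [← hE, conjTranspose_mul]
  have key : E * C * Eᴴ - V * M⁻¹ * Vᴴ
      = (E - V * M⁻¹ * Aᴴ * C⁻¹) * C * (E - V * M⁻¹ * Aᴴ * C⁻¹)ᴴ := by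
    have hG : (V * M⁻¹ * Aᴴ * C⁻¹)ᴴ = C⁻¹ * (A * (M⁻¹ * Vᴴ)) := by
      simp only [conjTranspose_mul, conjTranspose_conjTranspose, hCi, hMi]
    have h1 : E * C * (C⁻¹ * (A * (M⁻¹ * Vᴴ))) = V * M⁻¹ * Vᴴ := by
      rw [Matrix.mul_assoc, Matrix.mul_nonsing_inv_cancel_left _ _ hCd, ← Matrix.mul_assoc, hE,
        Matrix.mul_assoc]
    have h0 : V * M⁻¹ * Aᴴ * C⁻¹ * C = V * M⁻¹ * Aᴴ :=
      Matrix.nonsing_inv_mul_cancel_right _ _ hCd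
    have h2 : V * M⁻¹ * Aᴴ * C⁻¹ * C * Eᴴ = V * M⁻¹ * Vᴴ := by
      rw [h0, Matrix.mul_assoc, hE']
    have h3 : V * M⁻¹ * Aᴴ * C⁻¹ * C * (C⁻¹ * (A * (M⁻¹ * Vᴴ))) = V * M⁻¹ * Vᴴ := by
      have h4 : Aᴴ * (C⁻¹ * (A * (M⁻¹ * Vᴴ))) = Vᴴ := by
        have : Aᴴ * (C⁻¹ * (A * (M⁻¹ * Vᴴ))) = M * (M⁻¹ * Vᴴ) := by
          conv_rhs => rw [hM]
          rw [hM]; simp only [Matrix.mul_assoc]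
        rw [this, Matrix.mul_nonsing_inv_cancel_left _ _ hInv]
      rw [h0, Matrix.mul_assoc, h4]
    rw [conjTranspose_sub, hG, Matrix.sub_mul, Matrix.sub_mul, Matrix.mul_sub, Matrix.mul_sub,
      h1, h2, h3]
    simp
  rw [key]
  exact hC.posSemidef.mul_mul_conjTranspose_same _

/-- with positive definite `C_nn` and invertible `VᴴHᴴC_nn⁻¹HV`, for every
`E` satisfying the subspace unbiasedness constraint `EHV = V`, the matrix
`E C_nn Eᴴ − V(VᴴHᴴC_nn⁻¹HV)⁻¹Vᴴ` is positive semidefinite. -/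
theorem stmt_13 {m n p : ℕ} (H : Matrix (Fin m) (Fin n) ℂ)
    (Cnn : Matrix (Fin m) (Fin m) ℂ) (hCnn : Cnn.PosDef)
    (V : Matrix (Fin n) (Fin p) ℂ)
    (hInv : IsUnit (Vᴴ * Hᴴ * Cnn⁻¹ * H * V).det) :
    ∀ E : Matrix (Fin n) (Fin m) ℂ, E * H * V = V →
      (E * Cnn * Eᴴ - V * (Vᴴ * Hᴴ * Cnn⁻¹ * H * V)⁻¹ * Vᴴ).PosSemidef := by
  intro E hE
  refine aux_blue (H * V) Cnn hCnn V _ ?_ hInv E ?_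
  · simp only [conjTranspose_mul, Matrix.mul_assoc]
  · rw [← Matrix.mul_assoc, hE]
end

section
/- Let H ∈ ℂ^{m×n}, let C_nn ∈ ℂ^{m×m} be positive definite, let V ∈ ℂ^{n×p}, and assume both Hᴴ C_nn⁻¹ H and Vᴴ Hᴴ C_nn⁻¹ H V are invertible. Then the matrix (Hᴴ C_nn⁻¹ H)⁻¹ − V(Vᴴ Hᴴ C_nn⁻¹ H V)⁻¹ Vᴴ is positive semidefinite; i.e., when the parameter vector is known to lie in the column space of V, the subspace-constrained estimator E_{B2} has error covariance no larger (in the Loewner order) than that of the unconstrained globally unbiased estimator E_{B1}. -/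
open Matrix
open scoped ComplexOrder

/-- with positive definite `C_nn`, both `HᴴC_nn⁻¹H` and `VᴴHᴴC_nn⁻¹HV`
invertible, the matrix `(HᴴC_nn⁻¹H)⁻¹ − V(VᴴHᴴC_nn⁻¹HV)⁻¹Vᴴ` is positive semidefinite. -/
theorem stmt_14 {m n p : ℕ} (H : Matrix (Fin m) (Fin n) ℂ)
    (Cnn : Matrix (Fin m) (Fin m) ℂ) (hCnn : Cnn.PosDef)
    (V : Matrix (Fin n) (Fin p) ℂ)
    (hInv1 : IsUnit (Hᴴ * Cnn⁻¹ * H).det)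
    (hInv2 : IsUnit (Vᴴ * Hᴴ * Cnn⁻¹ * H * V).det) :
    ((Hᴴ * Cnn⁻¹ * H)⁻¹ - V * (Vᴴ * Hᴴ * Cnn⁻¹ * H * V)⁻¹ * Vᴴ).PosSemidef := by
  have hA : (Hᴴ * Cnn⁻¹ * H).PosSemidef := hCnn.inv.posSemidef.conjTranspose_mul_mul_same H
  have hBe : Vᴴ * Hᴴ * Cnn⁻¹ * H * V = Vᴴ * (Hᴴ * Cnn⁻¹ * H) * V := by
    simp only [Matrix.mul_assoc]
  rw [hBe] at hInv2 ⊢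
  generalize Hᴴ * Cnn⁻¹ * H = A at *
  have hB : (Vᴴ * A * V).PosSemidef := hA.conjTranspose_mul_mul_same V
  have hBB : (Vᴴ * A * V)⁻¹ * (Vᴴ * A * V) = 1 := Matrix.nonsing_inv_mul _ hInv2
  have hD : (A⁻¹ - V * (Vᴴ * A * V)⁻¹ * Vᴴ)ᴴ = A⁻¹ - V * (Vᴴ * A * V)⁻¹ * Vᴴ := by
    have h1 := hA.isHermitian.inv.eq
    have h2 := hB.isHermitian.inv.eq
    rw [conjTranspose_sub, conjTranspose_mul, conjTranspose_mul, h1, h2,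
      conjTranspose_conjTranspose, Matrix.mul_assoc V]
  have key := hA.conjTranspose_mul_mul_same (A⁻¹ - V * (Vᴴ * A * V)⁻¹ * Vᴴ)
  rw [hD] at key
  have e : (A⁻¹ - V * (Vᴴ * A * V)⁻¹ * Vᴴ) * A * (A⁻¹ - V * (Vᴴ * A * V)⁻¹ * Vᴴ)
      = A⁻¹ - V * (Vᴴ * A * V)⁻¹ * Vᴴ := by
    have h3 : (V * (Vᴴ * A * V)⁻¹ * Vᴴ) * A * (V * (Vᴴ * A * V)⁻¹ * Vᴴ)
        = V * (Vᴴ * A * V)⁻¹ * Vᴴ := by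
      calc _ = V * ((Vᴴ * A * V)⁻¹ * (Vᴴ * A * V)) * (Vᴴ * A * V)⁻¹ * Vᴴ := by
            simp only [Matrix.mul_assoc]
        _ = _ := by rw [hBB, Matrix.mul_one]
    rw [Matrix.sub_mul, Matrix.nonsing_inv_mul _ hInv1, Matrix.sub_mul, Matrix.one_mul, Matrix.mul_sub _ A⁻¹, h3,
      Matrix.mul_assoc _ A A⁻¹, Matrix.mul_nonsing_inv _ hInv1, Matrix.mul_one]
    abel
  rwa [e] at key
end
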